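/- (Reach-Avoid Bellman Equation) Let (x_t)_{t∈ℕ} be the trajectory under policy π and suppose g and h are bounded below along the trajectory, i.e., there exists m ∈ ℝ with g(x_t) ≥ m and h(x_t) ≥ m for all t. For each k ∈ ℕ define the reach-avoid value V_k = inf_{T ∈ ℕ} max( g(x_{k+T}), max_{t ∈ {0,…,T}} h(x_{k+t}) ). Then V_0 = max( h(x_0), min( g(x_0), V_1 ) ). -/

import Mathlib

/-!
The stopping time `T = 0` costs `max (h k) (g k)`, while stopping at `T + 1` from time `k` costs the
maximum of `h k` and the cost of stopping at `T` from time `k + 1`. Splitting the infimum over `T`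
accordingly and factoring out `max (h k)` gives the Bellman equation. The infima are
genuine, not junk values, because every cost from time `k` is at least `h k`.
-/

open Set

theorem ciInf_eq_inf_ciInf_add_one {α : Type*} [ConditionallyCompleteLattice α] {f : ℕ → α}
    (hf : BddBelow (range f)) : ⨅ n, f n = f 0 ⊓ ⨅ n, f (n + 1) := by
  have h_tail : BddBelow (range fun n => f (n + 1)) := hf.mono (range_comp_subset_range (· + 1) f)
  apply le_antisymm
  · exact le_inf (ciInf_le hf 0) (le_ciInf fun n => ciInf_le hf (n + 1))
  · refine le_ciInf fun n => ?_
    cases n with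
    | zero => exact inf_le_left
    | succ n => exact inf_le_of_right_le (ciInf_le h_tail n)

theorem max_ciInf {ι : Sort*} {α : Type*} [Nonempty ι] [ConditionallyCompleteLinearOrder α]
    {f : ι → α} (hf : BddBelow (range f)) (c : α) : max c (⨅ i, f i) = ⨅ i, max c (f i) := by
  have h_max : BddBelow (range fun i => max c (f i)) :=
    ⟨c, forall_mem_range.2 fun _ => le_max_left _ _⟩
  refine eq_of_forall_gt_iff fun b => ?_
  simp only [max_lt_iff, ciInf_lt_iff hf, ciInf_lt_iff h_max, exists_and_left]

theorem partialSups_add_one_eq_sup_partialSups {α : Type*} [SemilatticeSup α] (f : ℕ → α) (n : ℕ) :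
    partialSups f (n + 1) = f 0 ⊔ partialSups (fun i => f (i + 1)) n := by
  induction n with
  | zero => simp only [partialSups_add_one, partialSups_zero]
  | succ n ih => rw [partialSups_add_one, ih, partialSups_add_one, sup_assoc]

section ReachAvoid

variable {α : Type*}

/-- The reach-avoid cost of starting at time `k` and stopping `T` steps later, where `g t` and `h t`
are the values of the goal and avoid functions at time `t` of a trajectory. The running maximum of
`h` over `{k, …, k + T}` is encoded by `partialSups`. -/
def reachAvoidCost [LinearOrder α] (g h : ℕ → α) (k T : ℕ) : α :=
  max (g (k + T)) (partialSups (fun t => h (k + t)) T)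

/-- The reach-avoid value at time `k`: the optimal reach-avoid cost over all stopping times. -/
noncomputable def reachAvoidValue [ConditionallyCompleteLinearOrder α] (g h : ℕ → α) (k : ℕ) : α :=
  ⨅ T, reachAvoidCost g h k T

theorem reachAvoidCost_zero [LinearOrder α] (g h : ℕ → α) (k : ℕ) :
    reachAvoidCost g h k 0 = max (h k) (g k) := by
  simp only [reachAvoidCost, partialSups_zero, add_zero]
  exact max_comm _ _

theorem reachAvoidCost_add_one [LinearOrder α] (g h : ℕ → α) (k T : ℕ) :
    reachAvoidCost g h k (T + 1) = max (h k) (reachAvoidCost g h (k + 1) T) := by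
  rw [reachAvoidCost, reachAvoidCost, partialSups_add_one_eq_sup_partialSups, max_left_comm]
  simp only [add_zero, add_assoc, add_comm 1]

theorem bddBelow_range_reachAvoidCost [LinearOrder α] (g h : ℕ → α) (k : ℕ) :
    BddBelow (range (reachAvoidCost g h k)) :=
  ⟨h k, forall_mem_range.2 fun T =>
    le_max_of_le_right (le_partialSups_of_le (fun t => h (k + t)) (Nat.zero_le T))⟩

theorem reach_avoid_bellman_equation_general [ConditionallyCompleteLinearOrder α] (g h : ℕ → α)
    (k : ℕ) :
    reachAvoidValue g h k = max (h k) (min (g k) (reachAvoidValue g h (k + 1))) := calc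
  reachAvoidValue g h k
    = min (reachAvoidCost g h k 0) (⨅ T, reachAvoidCost g h k (T + 1)) :=
      ciInf_eq_inf_ciInf_add_one (bddBelow_range_reachAvoidCost g h k)
  _ = min (max (h k) (g k)) (⨅ T, max (h k) (reachAvoidCost g h (k + 1) T)) := by
      simp only [reachAvoidCost_zero, reachAvoidCost_add_one]
  _ = min (max (h k) (g k)) (max (h k) (reachAvoidValue g h (k + 1))) := by
      rw [reachAvoidValue, max_ciInf (bddBelow_range_reachAvoidCost g h (k + 1))]
  _ = max (h k) (min (g k) (reachAvoidValue g h (k + 1))) := (max_min_distrib_left _ _ _).symm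

end ReachAvoid

/-- **Reach-Avoid Bellman Equation.** Let `(x t)` be the trajectory under
policy `π`, with `g` and `h` bounded below along the trajectory. For each `k`
define the reach-avoid value
`V k = ⨅ T, max (g (x (k + T))) (max_{t ∈ {0,…,T}} h (x (k + t)))`.
Then `V 0 = max (h (x 0)) (min (g (x 0)) (V 1))`. -/
theorem reach_avoid_bellman_equation
    {X U : Type*} (f : X → U → X) (π : X → U) (x₀ : X)
    (g h : X → ℝ)
    (x : ℕ → X) (hx0 : x 0 = x₀) (hx : ∀ t, x (t + 1) = f (x t) (π (x t)))
    (m : ℝ) (hbdd : ∀ t, m ≤ g (x t) ∧ m ≤ h (x t))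
    (V : ℕ → ℝ)
    (hV : ∀ k, V k = ⨅ T : ℕ,
      max (g (x (k + T)))
        ((Finset.range (T + 1)).sup'
          (Finset.nonempty_range_iff.mpr (Nat.succ_ne_zero T))
          (fun t => h (x (k + t))))) :
    V 0 = max (h (x 0)) (min (g (x 0)) (V 1)) := by
  have hV_eq : V = reachAvoidValue (fun t => g (x t)) (fun t => h (x t)) := funext fun k => by
    simp only [hV, reachAvoidValue, reachAvoidCost, partialSups_eq_sup'_range]
  exact hV_eq ▸ reach_avoid_bellman_equation_general (fun t => g (x t)) (fun t => h (x t)) 0
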